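/- Let d ≥ 2, α ∈ (1,2), T > 0, and for 0 < t ≤ T define p_t(x) = (2π)^{−d} ∫_{ℝ^d} cos(⟨x,u⟩) e^{−tΨ(u)} du, where Ψ(u) = ∫_{|y|≤1} (1 − cos(⟨u,y⟩)) |y|^{−(d+α)} dy. Then for each 0 < t ≤ T the function p_t is continuously differentiable, each partial derivative ∂p_t/∂x_i belongs to L¹(ℝ^d), and there exists a constant C < ∞ (depending only on d, α, T) such that ‖∂p_t/∂x_i‖_{L¹(ℝ^d)} ≤ C t^{−1/α} for all 0 < t ≤ T and all i = 1,…,d. -/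

import Mathlib

open MeasureTheory Metric
open scoped RealInnerProductSpace

/-- Characteristic exponent of the truncated `α`-stable process. -/
noncomputable def Psi (d : ℕ) (α : ℝ) (u : EuclideanSpace ℝ (Fin d)) : ℝ :=
  ∫ y in Metric.closedBall (0 : EuclideanSpace ℝ (Fin d)) 1,
    (1 - Real.cos ⟪u, y⟫) / ‖y‖ ^ ((d : ℝ) + α)

/-- Transition density of the truncated `α`-stable process, via Fourier inversion. -/
noncomputable def pdens (d : ℕ) (α : ℝ) (t : ℝ) (x : EuclideanSpace ℝ (Fin d)) : ℝ :=
  ((2 * Real.pi) ^ d)⁻¹ *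
    ∫ u : EuclideanSpace ℝ (Fin d), Real.cos ⟪x, u⟫ * Real.exp (-t * Psi d α u)

/-!
Write `ν_R` for the stable Lévy measure restricted to the ball of radius `R`, and `p^R_t` for the
density with Lévy measure `ν_R`. Scaling gives `p_t(x) = l ^ d * p^l_T(l x)` with
`l = (T / t) ^ (1 / α) ≥ 1`, hence `‖∇p_t‖₁ = l * ‖∇p^l_T‖₁`. The measure `ν_l - ν_1` is finite, so
`p^l_T` is the average of translates of `p_T` against a probability measure, the compound Poisson
law of the jumps of size in `(1, l]`; averaging does not increase the `L¹` norm of the gradient.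
Therefore `‖∇p_t‖₁ ≤ (T / t) ^ (1 / α) * ‖∇p_T‖₁`. This is finite because `e^{-TΨ}` is a Schwartz
function: `Ψ` is smooth with polynomially bounded derivatives and grows like `|u| ^ α`.
-/

section CompoundPoisson

variable {E : Type*} [NormedAddCommGroup E] [InnerProductSpace ℝ E] [MeasurableSpace E]

/-- The `n`-fold convolution power `ν ∗ ⋯ ∗ ν` of a measure; the zeroth power is the Dirac mass
at the origin. -/
noncomputable def convPow (ν : Measure E) : ℕ → Measure E
  | 0 => Measure.dirac 0
  | n + 1 => ν.conv (convPow ν n)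

/-- The compound Poisson law `e^{-ν(E)} ∑ₙ ν^{∗n} / n!` with finite jump measure `ν`: the law of
the sum of the jumps of a Poisson point process with intensity `ν`. -/
noncomputable def compoundPoisson (ν : Measure E) : Measure E :=
  Measure.sum fun n => ENNReal.ofReal (Real.exp (-ν.real .univ) / n.factorial) • convPow ν n

lemma hasSum_exp_neg_div_factorial_mul_pow (m : ℝ) (z : ℂ) :
    HasSum (fun n : ℕ => (Real.exp (-m) / n.factorial : ℝ) * z ^ n) (Complex.exp (z - m)) := by
  have h := (NormedSpace.expSeries_div_hasSum_exp z).mul_left (Complex.exp (-m))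
  rw [← Complex.exp_eq_exp_ℂ, ← Complex.exp_add, neg_add_eq_sub] at h
  refine h.congr_fun fun n => ?_
  push_cast
  ring

variable (ν : Measure E) [IsFiniteMeasure ν]

instance isFiniteMeasure_convPow [BorelSpace E] [SecondCountableTopology E] (n : ℕ) :
    IsFiniteMeasure (convPow ν n) := by
  induction n with
  | zero => rw [convPow]; infer_instance
  | succ n ih => rw [convPow]; infer_instance

variable [BorelSpace E] [SecondCountableTopology E]

lemma charFun_convPow (n : ℕ) (u : E) : charFun (convPow ν n) u = charFun ν u ^ n := by
  induction n with
  | zero => simp [convPow]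
  | succ n ih => rw [convPow, charFun_conv, ih, pow_succ']

lemma measureReal_univ_convPow (n : ℕ) : (convPow ν n).real .univ = ν.real .univ ^ n := by
  have h := charFun_convPow ν n 0
  rw [charFun_zero, charFun_zero] at h
  exact_mod_cast h

instance isProbabilityMeasure_compoundPoisson : IsProbabilityMeasure (compoundPoisson ν) := by
  set m := ν.real .univ with hm
  have hsum : HasSum (fun n : ℕ => Real.exp (-m) / n.factorial * m ^ n) 1 := by
    rw [← Complex.hasSum_ofReal]
    simpa using hasSum_exp_neg_div_factorial_mul_pow m m
  have hmass (n : ℕ) : (ENNReal.ofReal (Real.exp (-m) / n.factorial) • convPow ν n) .univ =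
      ENNReal.ofReal (Real.exp (-m) / n.factorial * m ^ n) := by
    rw [Measure.smul_apply, smul_eq_mul, ENNReal.ofReal_mul (by positivity), hm,
      ← measureReal_univ_convPow, ofReal_measureReal]
  constructor
  rw [compoundPoisson, Measure.sum_apply _ .univ, tsum_congr hmass,
    ← ENNReal.ofReal_tsum_of_nonneg (fun n => by positivity) hsum.summable, hsum.tsum_eq,
    ENNReal.ofReal_one]

lemma charFun_compoundPoisson (u : E) :
    charFun (compoundPoisson ν) u = Complex.exp (charFun ν u - ν.real .univ) := by
  have hint : Integrable (fun x : E => Complex.exp (⟪x, u⟫ * Complex.I)) (compoundPoisson ν) :=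
    .of_bound (C := 1) (by fun_prop) (.of_forall fun x => (Complex.norm_exp_ofReal_mul_I _).le)
  rw [charFun_apply]
  refine (hasSum_integral_measure hint).unique ?_
  refine (hasSum_exp_neg_div_factorial_mul_pow (ν.real .univ) (charFun ν u)).congr_fun fun n => ?_
  rw [integral_smul_measure, ← charFun_apply, charFun_convPow,
    ENNReal.toReal_ofReal (by positivity), Complex.real_smul]

end CompoundPoisson

section LevyExponent

open scoped NNReal

variable {E : Type*} [NormedAddCommGroup E] [InnerProductSpace ℝ E]

lemma one_sub_cos_inner_le (u y : E) : 1 - Real.cos ⟪u, y⟫ ≤ ‖u‖ ^ 2 * ‖y‖ ^ 2 := by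
  have h : ⟪u, y⟫ ^ 2 ≤ (‖u‖ * ‖y‖) ^ 2 :=
    sq_le_sq' (neg_le_of_abs_le (abs_real_inner_le_norm u y)) (real_inner_le_norm u y)
  nlinarith [Real.one_sub_sq_div_two_le_cos (x := ⟪u, y⟫), sq_nonneg ⟪u, y⟫]

variable [MeasurableSpace E] {μ ν : Measure E} {u : E}

/-- The Lévy exponent `∫ (1 - cos ⟪u, y⟫) ∂ν(y)` of the symmetric pure-jump Lévy process with Lévy
measure `ν`: the process has characteristic function `exp (-t * levyExponent ν u)` at time `t`. -/
noncomputable def levyExponent (ν : Measure E) (u : E) : ℝ := ∫ y, (1 - Real.cos ⟪u, y⟫) ∂ν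

lemma levyExponent_nonneg : 0 ≤ levyExponent ν u :=
  integral_nonneg fun y => sub_nonneg.2 (Real.cos_le_one ⟪u, y⟫)

lemma levyExponent_nnreal_smul (t : ℝ≥0) : levyExponent (t • ν) u = t * levyExponent ν u :=
  integral_smul_nnreal_measure _ t

variable [BorelSpace E]

instance isNegInvariant_nnreal_smul [ν.IsNegInvariant] (t : ℝ≥0) : (t • ν).IsNegInvariant where
  neg_eq_self := by
    rw [Measure.neg, Measure.map_smul]
    exact congrArg (t • ·) ν.neg_eq_self

lemma conj_charFun_of_isNegInvariant [ν.IsNegInvariant] :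
    starRingEnd ℂ (charFun ν u) = charFun ν u := by
  rw [← charFun_neg]
  conv_rhs => rw [← Measure.neg_eq_self ν]
  simpa [Measure.neg] using (charFun_map_smul (μ := ν) (-1) u).symm

variable [SecondCountableTopology E]

lemma integrable_one_sub_cos_inner (hν : Integrable (fun y => ‖y‖ ^ 2) ν) (u : E) :
    Integrable (fun y => 1 - Real.cos ⟪u, y⟫) ν := by
  refine (hν.const_mul (‖u‖ ^ 2)).mono' (by fun_prop) (.of_forall fun y => ?_)
  rw [Real.norm_of_nonneg (sub_nonneg.2 (Real.cos_le_one _))]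
  exact one_sub_cos_inner_le u y

lemma levyExponent_add (hμ : Integrable (fun y => ‖y‖ ^ 2) μ)
    (hν : Integrable (fun y => ‖y‖ ^ 2) ν) :
    levyExponent (μ + ν) u = levyExponent μ u + levyExponent ν u :=
  integral_add_measure (integrable_one_sub_cos_inner hμ u) (integrable_one_sub_cos_inner hν u)

variable [IsFiniteMeasure ν] [ν.IsNegInvariant]

lemma charFun_sub_measureReal_univ : charFun ν u - ν.real .univ = -levyExponent ν u := by
  have hint : Integrable (fun y : E => Complex.exp (⟪y, u⟫ * Complex.I)) ν :=
    .of_bound (C := 1) (by fun_prop) (.of_forall fun x => (Complex.norm_exp_ofReal_mul_I _).le)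
  have hcos : Integrable (fun y : E => Real.cos ⟪u, y⟫) ν :=
    .of_bound (C := 1) (by fun_prop) (.of_forall fun y => Real.abs_cos_le_one _)
  have hre : (charFun ν u).re = ∫ y, Real.cos ⟪u, y⟫ ∂ν := by
    rw [charFun_apply, ← RCLike.re_eq_complex_re, ← integral_re hint]
    refine integral_congr_ae (.of_forall fun y => ?_)
    simp only [RCLike.re_eq_complex_re, Complex.exp_ofReal_mul_I_re, real_inner_comm]
  rw [← Complex.conj_eq_iff_re.1 conj_charFun_of_isNegInvariant, hre, levyExponent,
    integral_sub (integrable_const 1) hcos]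
  simp

lemma charFun_compoundPoisson_eq_exp_neg_levyExponent :
    charFun (compoundPoisson ν) u = Real.exp (-levyExponent ν u) := by
  rw [charFun_compoundPoisson, charFun_sub_measureReal_univ]
  push_cast
  rfl

end LevyExponent

section TrigonometricIntegral

universe w

variable {E : Type w} [NormedAddCommGroup E] [InnerProductSpace ℝ E]

section Derivative

variable {V : Type*} [NormedAddCommGroup V] [NormedSpace ℝ V]

lemma hasFDerivAt_comp_inner_smul {φ : ℝ → ℝ} {φ' : ℝ} {u y : E}
    (hφ : HasDerivAt φ φ' ⟪u, y⟫) (w : V) :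
    HasFDerivAt (fun u : E => φ ⟪u, y⟫ • w) (φ' • (innerSL ℝ y).smulRight w) u := by
  have hinner : HasFDerivAt (fun u : E => ⟪u, y⟫) (innerSL ℝ y) u := by
    simp only [real_inner_comm y]
    exact (innerSL ℝ y).hasFDerivAt
  convert! (hφ.comp_hasFDerivAt u hinner).smul_const w using 1
  ext v
  simp [smul_smul]

lemma norm_sin_inner_smul_le (u y : E) (w : V) :
    ‖Real.sin ⟪u, y⟫ • w‖ ≤ ‖u‖ * (‖y‖ ^ 1 * ‖w‖) := by
  rw [norm_smul, pow_one, ← mul_assoc]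
  gcongr
  exact Real.abs_sin_le_abs.trans (abs_real_inner_le_norm u y)

variable [MeasurableSpace E] {ν : Measure E} {W : E → V}

lemma integrable_norm_pow_mul_norm_innerSL_smulRight {n : ℕ} :
    Integrable (fun y => ‖y‖ ^ n * ‖(innerSL ℝ y).smulRight (W y)‖) ν ↔
      Integrable (fun y => ‖y‖ ^ (n + 1) * ‖W y‖) ν := by
  simp only [ContinuousLinearMap.norm_smulRight_apply, innerSL_apply_norm, ← mul_assoc,
    ← pow_succ]

variable [BorelSpace E] [SecondCountableTopology E]

lemma aestronglyMeasurable_innerSL_smulRight (hW : AEStronglyMeasurable W ν) :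
    AEStronglyMeasurable (fun y => (innerSL ℝ y).smulRight (W y)) ν := by
  have hcont : Continuous (fun p : E × V => (innerSL ℝ p.1).smulRight p.2) := by fun_prop
  exact hcont.comp_aestronglyMeasurable (aestronglyMeasurable_id.prodMk hW)

lemma hasFDerivAt_integral_comp_inner_smul {φ φ' : ℝ → ℝ} {k : ℕ}
    (hφ : ∀ s, HasDerivAt φ (φ' s) s) (hφ' : Continuous φ') (hbound : ∀ s, |φ' s| ≤ |s| ^ k)
    (hW : AEStronglyMeasurable W ν) {u : E} (hint : Integrable (fun y => φ ⟪u, y⟫ • W y) ν)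
    (hmoment : Integrable (fun y => ‖y‖ ^ (k + 1) * ‖W y‖) ν) :
    HasFDerivAt (fun u => ∫ y, φ ⟪u, y⟫ • W y ∂ν)
      (∫ y, φ' ⟪u, y⟫ • (innerSL ℝ y).smulRight (W y) ∂ν) u := by
  have hφ_cont : Continuous φ := continuous_iff_continuousAt.2 fun s => (hφ s).continuousAt
  have hmeas (v : E) : AEStronglyMeasurable (fun y => φ ⟪v, y⟫ • W y) ν :=
    (by fun_prop : Continuous fun y : E => φ ⟪v, y⟫).aestronglyMeasurable.smul hW
  have hmeas' : AEStronglyMeasurable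
      (fun y => φ' ⟪u, y⟫ • (innerSL ℝ y).smulRight (W y)) ν :=
    (by fun_prop : Continuous fun y : E => φ' ⟪u, y⟫).aestronglyMeasurable.smul
      (aestronglyMeasurable_innerSL_smulRight hW)
  refine hasFDerivAt_integral_of_dominated_of_fderiv_le (ball_mem_nhds u one_pos)
    (.of_forall hmeas) hint hmeas'
    (bound := fun y => (‖u‖ + 1) ^ k * (‖y‖ ^ (k + 1) * ‖W y‖)) (.of_forall fun y v hv => ?_)
    (hmoment.const_mul _) (.of_forall fun y v _ => hasFDerivAt_comp_inner_smul (hφ _) (W y))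
  have hv : ‖v‖ ≤ ‖u‖ + 1 := by
    linarith [norm_sub_norm_le v u, mem_ball_iff_norm.1 hv]
  calc ‖φ' ⟪v, y⟫ • (innerSL ℝ y).smulRight (W y)‖
      = |φ' ⟪v, y⟫| * (‖y‖ * ‖W y‖) := by
        rw [norm_smul, ContinuousLinearMap.norm_smulRight_apply, innerSL_apply_norm,
          Real.norm_eq_abs]
    _ ≤ |⟪v, y⟫| ^ k * (‖y‖ * ‖W y‖) := by gcongr; exact hbound _
    _ ≤ (‖v‖ * ‖y‖) ^ k * (‖y‖ * ‖W y‖) := by gcongr; exact abs_real_inner_le_norm v y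
    _ ≤ ((‖u‖ + 1) * ‖y‖) ^ k * (‖y‖ * ‖W y‖) := by gcongr
    _ = (‖u‖ + 1) ^ k * (‖y‖ ^ (k + 1) * ‖W y‖) := by rw [mul_pow]; ring

lemma hasFDerivAt_integral_cos_inner_smul (hW : Integrable W ν)
    (hmoment : Integrable (fun y => ‖y‖ ^ 1 * ‖W y‖) ν) (c : ℝ) (u : E) :
    HasFDerivAt (fun u => ∫ y, Real.cos (⟪u, y⟫ + c) • W y ∂ν)
      (∫ y, Real.cos (⟪u, y⟫ + (c + Real.pi / 2)) • (innerSL ℝ y).smulRight (W y) ∂ν) u := by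
  have hcos (s : ℝ) :
      HasDerivAt (fun s => Real.cos (s + c)) (Real.cos (s + (c + Real.pi / 2))) s := by
    rw [← add_assoc, Real.cos_add_pi_div_two]
    simpa using ((hasDerivAt_id s).add_const c).cos
  refine hasFDerivAt_integral_comp_inner_smul (k := 0) hcos (by fun_prop)
    (fun s => by simpa only [pow_zero] using Real.abs_cos_le_one _) hW.1 ?_ hmoment
  exact hW.bdd_smul 1 (by fun_prop) (.of_forall fun y => Real.abs_cos_le_one _)

lemma hasFDerivAt_integral_sin_inner_smul (hW : AEStronglyMeasurable W ν)
    (hmoment : Integrable (fun y => ‖y‖ ^ 1 * ‖W y‖) ν) (u : E) :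
    HasFDerivAt (fun u => ∫ y, Real.sin ⟪u, y⟫ • W y ∂ν)
      (∫ y, Real.cos (⟪u, y⟫ + 0) • (innerSL ℝ y).smulRight (W y) ∂ν) u := by
  simp only [add_zero]
  refine hasFDerivAt_integral_comp_inner_smul (k := 0) Real.hasDerivAt_sin Real.continuous_cos
    (fun s => by simpa only [pow_zero] using Real.abs_cos_le_one s) hW ?_ hmoment
  exact (hmoment.const_mul ‖u‖).mono' (AEStronglyMeasurable.smul (by fun_prop) hW)
    (.of_forall fun y => norm_sin_inner_smul_le u y (W y))

lemma hasFDerivAt_levyExponent (hν : Integrable (fun y => ‖y‖ ^ 2) ν) (u : E) :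
    HasFDerivAt (levyExponent ν)
      (∫ y, Real.sin ⟪u, y⟫ • (innerSL ℝ y).smulRight (1 : ℝ) ∂ν) u := by
  have hlevy : levyExponent ν = fun u => ∫ y, (1 - Real.cos ⟪u, y⟫) • (1 : ℝ) ∂ν := by
    simp only [smul_eq_mul, mul_one]
    rfl
  rw [hlevy]
  refine hasFDerivAt_integral_comp_inner_smul (k := 1) (φ := fun s => 1 - Real.cos s)
    (fun s => by simpa only [neg_neg] using (Real.hasDerivAt_cos s).const_sub 1)
    Real.continuous_sin (fun s => by simpa only [pow_one] using Real.abs_sin_le_abs)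
    aestronglyMeasurable_const ?_ (by simpa using hν)
  simpa only [smul_eq_mul, mul_one] using integrable_one_sub_cos_inner hν u

end Derivative

section TemperateGrowth

variable [MeasurableSpace E] [BorelSpace E] [SecondCountableTopology E] {ν : Measure E}

lemma contDiff_and_bounded_integral_cos_inner_smul (n : ℕ) {V : Type w} [NormedAddCommGroup V]
    [NormedSpace ℝ V] {W : E → V} (hW : Integrable W ν)
    (hmoment : ∀ k, Integrable (fun y => ‖y‖ ^ k * ‖W y‖) ν) (c : ℝ) :
    ContDiff ℝ n (fun u => ∫ y, Real.cos (⟪u, y⟫ + c) • W y ∂ν) ∧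
      ∃ C, ∀ u, ‖iteratedFDeriv ℝ n (fun u => ∫ y, Real.cos (⟪u, y⟫ + c) • W y ∂ν) u‖ ≤ C := by
  induction n generalizing V c with
  | zero =>
    have hderiv := hasFDerivAt_integral_cos_inner_smul hW (hmoment 1) c
    refine ⟨contDiff_zero.2 <| continuous_iff_continuousAt.2 fun u => (hderiv u).continuousAt,
      ∫ y, ‖W y‖ ∂ν, fun u => ?_⟩
    rw [norm_iteratedFDeriv_zero]
    refine norm_integral_le_of_norm_le hW.norm (.of_forall fun y => ?_)
    rw [norm_smul]
    exact mul_le_of_le_one_left (norm_nonneg _) (Real.abs_cos_le_one _)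
  | succ n ih =>
    have hderiv := hasFDerivAt_integral_cos_inner_smul hW (hmoment 1) c
    have hmoment' (k : ℕ) := integrable_norm_pow_mul_norm_innerSL_smulRight.2 (hmoment (k + 1))
    have hW' : Integrable (fun y => (innerSL ℝ y).smulRight (W y)) ν :=
      (integrable_norm_iff (aestronglyMeasurable_innerSL_smulRight hW.1)).1 <| by
        simpa only [pow_zero, one_mul] using hmoment' 0
    obtain ⟨hcont, C, hC⟩ := ih hW' hmoment' (c + Real.pi / 2)
    have hfderiv := funext fun u => (hderiv u).fderiv
    refine ⟨?_, C, fun u => ?_⟩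
    · push_cast
      rw [contDiff_succ_iff_fderiv, hfderiv]
      exact ⟨fun u => (hderiv u).differentiableAt, by simp, hcont⟩
    · rw [← norm_iteratedFDeriv_fderiv, hfderiv]
      exact hC u

lemma hasTemperateGrowth_integral_cos_inner_smul {V : Type w} [NormedAddCommGroup V]
    [NormedSpace ℝ V] {W : E → V} (hW : Integrable W ν)
    (hmoment : ∀ k, Integrable (fun y => ‖y‖ ^ k * ‖W y‖) ν) (c : ℝ) :
    (fun u => ∫ y, Real.cos (⟪u, y⟫ + c) • W y ∂ν).HasTemperateGrowth := by
  have h (n : ℕ) := contDiff_and_bounded_integral_cos_inner_smul n hW hmoment c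
  refine ⟨contDiff_infty.2 fun n => (h n).1, fun n => ?_⟩
  obtain ⟨C, hC⟩ := (h n).2
  exact ⟨0, C, by simpa only [pow_zero, mul_one] using hC⟩

lemma hasTemperateGrowth_integral_sin_inner_smul {V : Type w} [NormedAddCommGroup V]
    [NormedSpace ℝ V] {W : E → V} (hW : AEStronglyMeasurable W ν)
    (hmoment : ∀ k, 1 ≤ k → Integrable (fun y => ‖y‖ ^ k * ‖W y‖) ν) :
    (fun u => ∫ y, Real.sin ⟪u, y⟫ • W y ∂ν).HasTemperateGrowth := by
  have hderiv := hasFDerivAt_integral_sin_inner_smul hW (hmoment 1 le_rfl)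
  have hmoment' (k : ℕ) :=
    integrable_norm_pow_mul_norm_innerSL_smulRight.2 (hmoment (k + 1) (by omega))
  have hW' : Integrable (fun y => (innerSL ℝ y).smulRight (W y)) ν :=
    (integrable_norm_iff (aestronglyMeasurable_innerSL_smulRight hW)).1 <| by
      simpa only [pow_zero, one_mul] using hmoment' 0
  refine .of_fderiv (k := 1) (C := ∫ y, ‖y‖ ^ 1 * ‖W y‖ ∂ν) ?_
    (fun u => (hderiv u).differentiableAt) fun u => ?_
  · rw [funext fun u => (hderiv u).fderiv]
    exact hasTemperateGrowth_integral_cos_inner_smul hW' hmoment' 0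
  · have : 0 ≤ ∫ y, ‖y‖ ^ 1 * ‖W y‖ ∂ν := integral_nonneg fun y => by positivity
    calc ‖∫ y, Real.sin ⟪u, y⟫ • W y ∂ν‖ ≤ ∫ y, ‖u‖ * (‖y‖ ^ 1 * ‖W y‖) ∂ν :=
          norm_integral_le_of_norm_le ((hmoment 1 le_rfl).const_mul _)
            (.of_forall fun y => norm_sin_inner_smul_le u y (W y))
      _ = (∫ y, ‖y‖ ^ 1 * ‖W y‖ ∂ν) * ‖u‖ := by rw [integral_const_mul, mul_comm]
      _ ≤ (∫ y, ‖y‖ ^ 1 * ‖W y‖ ∂ν) * (1 + ‖u‖) ^ 1 := by gcongr; linarith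

lemma hasTemperateGrowth_levyExponent (hν : ∀ k, 2 ≤ k → Integrable (fun y => ‖y‖ ^ k) ν) :
    (levyExponent ν).HasTemperateGrowth := by
  have hint := integrable_one_sub_cos_inner (hν 2 le_rfl)
  have hderiv := hasFDerivAt_levyExponent (hν 2 le_rfl)
  refine .of_fderiv (k := 2) (C := ∫ y, ‖y‖ ^ 2 ∂ν) ?_
    (fun u => (hderiv u).differentiableAt) fun u => ?_
  · rw [funext fun u => (hderiv u).fderiv]
    refine hasTemperateGrowth_integral_sin_inner_smul
      (aestronglyMeasurable_innerSL_smulRight aestronglyMeasurable_const) fun k hk => ?_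
    rw [integrable_norm_pow_mul_norm_innerSL_smulRight]
    simpa using hν (k + 1) (by omega)
  · have : 0 ≤ ∫ y, ‖y‖ ^ 2 ∂ν := integral_nonneg fun y => by positivity
    calc ‖levyExponent ν u‖ = levyExponent ν u := Real.norm_of_nonneg levyExponent_nonneg
      _ ≤ ∫ y, ‖u‖ ^ 2 * ‖y‖ ^ 2 ∂ν :=
          integral_mono (hint u) ((hν 2 le_rfl).const_mul _) (one_sub_cos_inner_le u)
      _ = (∫ y, ‖y‖ ^ 2 ∂ν) * ‖u‖ ^ 2 := by rw [integral_const_mul, mul_comm]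
      _ ≤ (∫ y, ‖y‖ ^ 2 ∂ν) * (1 + ‖u‖) ^ 2 := by gcongr; linarith

end TemperateGrowth

end TrigonometricIntegral

section SchwartzExponential

open scoped SchwartzMap

lemma one_add_pow_le_two_pow_mul_one_add_rpow_pow {r α : ℝ} (hr : 0 ≤ r) {k m : ℕ}
    (hm : k ≤ α * m) : (1 + r) ^ k ≤ 2 ^ k * (1 + r ^ α) ^ m := by
  have hrα : 0 ≤ r ^ α := by positivity
  rcases le_total r 1 with hr1 | hr1
  · calc (1 + r) ^ k ≤ 2 ^ k * 1 := by rw [mul_one]; gcongr; linarith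
      _ ≤ 2 ^ k * (1 + r ^ α) ^ m := by gcongr; exact one_le_pow₀ (by linarith)
  · calc (1 + r) ^ k ≤ (2 * r) ^ k := by gcongr; linarith
      _ = 2 ^ k * r ^ (k : ℝ) := by rw [mul_pow, Real.rpow_natCast]
      _ ≤ 2 ^ k * r ^ (α * m) := by gcongr
      _ = 2 ^ k * (r ^ α) ^ m := by rw [Real.rpow_mul hr, Real.rpow_natCast]
      _ ≤ 2 ^ k * (1 + r ^ α) ^ m := by gcongr; linarith

lemma pow_mul_exp_neg_mul_le {c s : ℝ} (hc : 0 < c) (hs : 0 ≤ s) (m : ℕ) :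
    s ^ m * Real.exp (-(c * s)) ≤ m.factorial / c ^ m := by
  have h := Real.pow_div_factorial_le_exp (c * s) (by positivity) m
  rw [mul_pow, div_le_iff₀ (by positivity)] at h
  rw [Real.exp_neg, ← div_eq_mul_inv, div_le_div_iff₀ (by positivity) (by positivity)]
  linarith

variable {E : Type*} [NormedAddCommGroup E]

lemma exists_one_add_norm_pow_mul_exp_le {P : E → ℝ} {a c α : ℝ} (hc : 0 < c) (hα : 0 < α)
    (hP : ∀ u, P u ≤ a - c * ‖u‖ ^ α) (k : ℕ) :
    ∃ C, ∀ u, (1 + ‖u‖) ^ k * Real.exp (P u) ≤ C := by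
  obtain ⟨m, hm⟩ := exists_nat_ge (k / α)
  rw [div_le_iff₀' hα] at hm
  refine ⟨2 ^ k * Real.exp (a + c) * (m.factorial / c ^ m), fun u => ?_⟩
  calc (1 + ‖u‖) ^ k * Real.exp (P u)
      ≤ 2 ^ k * (1 + ‖u‖ ^ α) ^ m * Real.exp (a + c + -(c * (1 + ‖u‖ ^ α))) := by
        gcongr
        · exact one_add_pow_le_two_pow_mul_one_add_rpow_pow (norm_nonneg u) hm
        · linarith [hP u]
    _ = 2 ^ k * Real.exp (a + c) * ((1 + ‖u‖ ^ α) ^ m * Real.exp (-(c * (1 + ‖u‖ ^ α)))) := by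
        rw [Real.exp_add]; ring
    _ ≤ 2 ^ k * Real.exp (a + c) * (m.factorial / c ^ m) := by
        gcongr
        exact pow_mul_exp_neg_mul_le hc (by positivity) m

variable [NormedSpace ℝ E]

lemma exists_norm_iteratedFDeriv_exp_comp_le {P : E → ℝ} (hP : P.HasTemperateGrowth) (n : ℕ) :
    ∃ (k : ℕ) (C : ℝ), 0 ≤ C ∧ ∀ u, ‖iteratedFDeriv ℝ n (fun u => Real.exp (P u)) u‖ ≤
      C * (1 + ‖u‖) ^ k * Real.exp (P u) := by
  obtain ⟨k, C, hC, hbound⟩ := hP.norm_iteratedFDeriv_le_uniform n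
  refine ⟨k * n, n.factorial * (C + 1) ^ n, by positivity, fun u => ?_⟩
  have hexp (i : ℕ) : ‖iteratedFDeriv ℝ i Real.exp (P u)‖ ≤ Real.exp (P u) := by
    rw [norm_iteratedFDeriv_eq_norm_iteratedDeriv, iteratedDeriv_eq_iterate, Real.iter_deriv_exp,
      Real.norm_of_nonneg (Real.exp_pos _).le]
  have hone : 1 ≤ (1 + ‖u‖) ^ k := one_le_pow₀ (by linarith [norm_nonneg u])
  have hderiv (i : ℕ) (hi : 1 ≤ i) (hin : i ≤ n) :
      ‖iteratedFDeriv ℝ i P u‖ ≤ ((C + 1) * (1 + ‖u‖) ^ k) ^ i := calc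
    ‖iteratedFDeriv ℝ i P u‖ ≤ C * (1 + ‖u‖) ^ k := hbound i hin u
    _ ≤ (C + 1) * (1 + ‖u‖) ^ k := by gcongr; linarith
    _ ≤ ((C + 1) * (1 + ‖u‖) ^ k) ^ i := le_self_pow₀ (by nlinarith) (by omega)
  calc ‖iteratedFDeriv ℝ n (fun u => Real.exp (P u)) u‖
      ≤ n.factorial * Real.exp (P u) * ((C + 1) * (1 + ‖u‖) ^ k) ^ n :=
        norm_iteratedFDeriv_comp_le Real.contDiff_exp hP.1 (by exact_mod_cast le_top) u
          (fun i _ => hexp i) hderiv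
    _ = n.factorial * (C + 1) ^ n * (1 + ‖u‖) ^ (k * n) * Real.exp (P u) := by
        rw [mul_pow, ← pow_mul]; ring

lemma exists_schwartzMap_eq_exp {P : E → ℝ} (hP : P.HasTemperateGrowth)
    (hdecay : ∀ k : ℕ, ∃ C, ∀ u, (1 + ‖u‖) ^ k * Real.exp (P u) ≤ C) :
    ∃ f : 𝓢(E, ℝ), ⇑f = fun u => Real.exp (P u) := by
  refine ⟨⟨fun u => Real.exp (P u), Real.contDiff_exp.comp hP.1, fun k n => ?_⟩, rfl⟩
  obtain ⟨j, C, hC, hderiv⟩ := exists_norm_iteratedFDeriv_exp_comp_le hP n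
  obtain ⟨D, hD⟩ := hdecay (k + j)
  refine ⟨C * D, fun u => ?_⟩
  calc ‖u‖ ^ k * ‖iteratedFDeriv ℝ n (fun u => Real.exp (P u)) u‖
      ≤ (1 + ‖u‖) ^ k * (C * (1 + ‖u‖) ^ j * Real.exp (P u)) := by
        gcongr
        · linarith
        · exact hderiv u
    _ = C * ((1 + ‖u‖) ^ (k + j) * Real.exp (P u)) := by rw [pow_add]; ring
    _ ≤ C * D := by gcongr; exact hD u

end SchwartzExponential

section CosineTransform

open scoped SchwartzMap FourierTransform

variable {E : Type*} [NormedAddCommGroup E] [InnerProductSpace ℝ E] [FiniteDimensional ℝ E]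
  [MeasurableSpace E] [BorelSpace E]

/-- The cosine transform `x ↦ ∫ cos ⟪x, u⟫ f(u) du`. For even `f` it is the Fourier transform of
`f`, without normalization of the frequency by `2π`. -/
noncomputable def cosTransform (f : E → ℝ) (x : E) : ℝ := ∫ u, Real.cos ⟪x, u⟫ * f u

lemma cosTransform_eq_re_fourier {f : E → ℝ} (hf : Integrable f) (x : E) :
    cosTransform f x = (𝓕 (fun u => (f u : ℂ)) ((2 * Real.pi)⁻¹ • x)).re := by
  have hint : Integrable (fun u => Complex.exp ((-⟪x, u⟫ : ℝ) * Complex.I) * (f u : ℂ)) :=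
    hf.ofReal.bdd_mul (c := 1) (by fun_prop)
      (.of_forall fun u => (Complex.norm_exp_ofReal_mul_I _).le)
  have hphase (u : E) : -2 * Real.pi * ⟪u, (2 * Real.pi)⁻¹ • x⟫ = -⟪x, u⟫ := by
    rw [inner_smul_right, real_inner_comm]
    field_simp
  simp only [Real.fourier_eq', smul_eq_mul, hphase]
  rw [← RCLike.re_eq_complex_re, ← integral_re hint, cosTransform]
  refine integral_congr_ae (.of_forall fun u => ?_)
  simp only [RCLike.re_eq_complex_re, Complex.re_mul_ofReal, Complex.exp_ofReal_mul_I_re,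
    Real.cos_neg]

lemma exists_schwartzMap_eq_cosTransform (f : 𝓢(E, ℝ)) :
    ∃ p : 𝓢(E, ℝ), ⇑p = cosTransform f := by
  let F : 𝓢(E, ℂ) := 𝓕 (f.postcompCLM Complex.ofRealCLM)
  let dilation : E ≃L[ℝ] E :=
    ContinuousLinearEquiv.smulLeft (Units.mk0 (2 * Real.pi)⁻¹ (by positivity))
  refine ⟨SchwartzMap.compCLMOfContinuousLinearEquiv ℝ dilation (F.postcompCLM Complex.reCLM),
    funext fun x => ?_⟩
  rw [cosTransform_eq_re_fourier f.integrable]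
  rfl

lemma cosTransform_eq_pow_finrank_mul (f : E → ℝ) {l : ℝ} (hl : 0 < l) (x : E) :
    cosTransform f x = l ^ Module.finrank ℝ E * cosTransform (fun u => f (l • u)) (l • x) := by
  have h := Measure.integral_comp_smul_of_nonneg (volume : Measure E)
    (fun u => Real.cos ⟪x, u⟫ * f u) l (hR := hl.le)
  rw [smul_eq_mul, eq_inv_mul_iff_mul_eq₀ (by positivity)] at h
  simp only [cosTransform, ← h, inner_smul_right, real_inner_smul_left]

variable {μ : Measure E} [IsFiniteMeasure μ]

lemma integral_cos_inner_add {x u : E} {g : ℝ} (hg : charFun μ u = g) :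
    ∫ z, Real.cos ⟪x + z, u⟫ ∂μ = Real.cos ⟪x, u⟫ * g := by
  have hint : Integrable (fun z => Complex.exp (⟪x + z, u⟫ * Complex.I)) μ :=
    .of_bound (C := 1) (by fun_prop) (.of_forall fun z => (Complex.norm_exp_ofReal_mul_I _).le)
  have hexp : ∫ z, Complex.exp (⟪x + z, u⟫ * Complex.I) ∂μ =
      Complex.exp (⟪x, u⟫ * Complex.I) * g := by
    simp only [← hg, charFun_apply, ← integral_const_mul, ← Complex.exp_add, ← add_mul,
      inner_add_left, Complex.ofReal_add]
  have hre := congrArg Complex.re hexp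
  rw [← RCLike.re_eq_complex_re, ← integral_re hint] at hre
  simpa only [RCLike.re_eq_complex_re, Complex.re_mul_ofReal, Complex.exp_ofReal_mul_I_re]
    using hre

lemma integral_cosTransform_add {f g : E → ℝ} (hf : Integrable f)
    (hg : ∀ u, charFun μ u = g u) (x : E) :
    ∫ z, cosTransform f (x + z) ∂μ = cosTransform (fun u => g u * f u) x := by
  have hint : Integrable (Function.uncurry fun z u => Real.cos ⟪x + z, u⟫ * f u)
      (μ.prod volume) :=
    (hf.comp_snd μ).bdd_mul (c := 1) (by fun_prop) (.of_forall fun p => Real.abs_cos_le_one _)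
  simp only [cosTransform]
  rw [integral_integral_swap hint]
  refine integral_congr_ae (.of_forall fun u => ?_)
  simp only [integral_mul_const, integral_cos_inner_add (hg u), mul_assoc]

end CosineTransform

section TranslationAverage

variable {G F : Type*} [AddGroup G] [MeasurableSpace G] [MeasurableAdd₂ G] [NormedAddCommGroup F]
  {lam μ : Measure G} [SFinite lam] [lam.IsAddRightInvariant] [IsFiniteMeasure μ] {g : G → F}

lemma integrable_comp_add_prod (hg : Integrable g lam) :
    Integrable (fun p : G × G => g (p.1 + p.2)) (lam.prod μ) :=
  (measurePreserving_prod_add_swap_right lam μ).integrable_comp_of_integrable (hg.comp_snd μ)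

variable [NormedSpace ℝ F]

lemma integral_norm_integral_comp_add_le (hg : Integrable g lam) :
    ∫ x, ‖∫ z, g (x + z) ∂μ‖ ∂lam ≤ μ.real .univ * ∫ x, ‖g x‖ ∂lam := by
  have hprod := integrable_comp_add_prod (μ := μ) hg
  calc ∫ x, ‖∫ z, g (x + z) ∂μ‖ ∂lam ≤ ∫ x, ∫ z, ‖g (x + z)‖ ∂μ ∂lam :=
        integral_mono hprod.integral_prod_left.norm hprod.norm.integral_prod_left
          fun x => norm_integral_le_integral_norm fun z => g (x + z)
    _ = ∫ z, ∫ x, ‖g (x + z)‖ ∂lam ∂μ := integral_integral_swap hprod.norm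
    _ = μ.real .univ * ∫ x, ‖g x‖ ∂lam := by
        simp only [integral_add_right_eq_self fun x => ‖g x‖, integral_const, smul_eq_mul]

end TranslationAverage

section Gradient

variable {E F : Type*} [NormedAddCommGroup E] [NormedSpace ℝ E] [MeasurableSpace E] [BorelSpace E]
  [NormedAddCommGroup F] [NormedSpace ℝ F] {f : E → F}

lemma hasFDerivAt_integral_comp_add [SecondCountableTopology E] {μ : Measure E}
    [IsFiniteMeasure μ] {C C' : ℝ} (hf : ContDiff ℝ 1 f)
    (hC : ∀ x, ‖f x‖ ≤ C) (hC' : ∀ x, ‖fderiv ℝ f x‖ ≤ C') (x : E) :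
    HasFDerivAt (fun x => ∫ z, f (x + z) ∂μ) (∫ z, fderiv ℝ f (x + z) ∂μ) x := by
  have hcont := hf.continuous
  have := hf.continuous_fderiv one_ne_zero
  refine hasFDerivAt_integral_of_dominated_of_fderiv_le
    (F' := fun x z => fderiv ℝ f (x + z)) (bound := fun _ => C') Filter.univ_mem
    (.of_forall fun x => by fun_prop) (.of_bound (by fun_prop) C (.of_forall fun z => hC _))
    (by fun_prop) (.of_forall fun z x _ => hC' _) (integrable_const C')
    (.of_forall fun z y _ => ?_)
  exact (hasFDerivAt_comp_add_right z).2 (hf.differentiable one_ne_zero (y + z)).hasFDerivAt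

variable [FiniteDimensional ℝ E] {lam : Measure E} [lam.IsAddHaarMeasure]

lemma integral_norm_fderiv_integral_comp_add_le {μ : Measure E} [IsProbabilityMeasure μ]
    {C C' : ℝ} (hf : ContDiff ℝ 1 f) (hC : ∀ x, ‖f x‖ ≤ C) (hC' : ∀ x, ‖fderiv ℝ f x‖ ≤ C')
    (hint : Integrable (fderiv ℝ f) lam) :
    ∫ x, ‖fderiv ℝ (fun x => ∫ z, f (x + z) ∂μ) x‖ ∂lam ≤ ∫ x, ‖fderiv ℝ f x‖ ∂lam := by
  simp only [fun x => (hasFDerivAt_integral_comp_add (μ := μ) hf hC hC' x).fderiv]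
  simpa only [probReal_univ, one_mul] using integral_norm_integral_comp_add_le (μ := μ) hint

lemma integral_norm_fderiv_pow_finrank_smul_comp_smul (f : E → F) {l : ℝ} (hl : 0 < l) :
    ∫ x, ‖fderiv ℝ (fun x => l ^ Module.finrank ℝ E • f (l • x)) x‖ ∂lam =
      l * ∫ x, ‖fderiv ℝ f x‖ ∂lam := by
  have hsmul (x : E) : fderiv ℝ (fun x => l ^ Module.finrank ℝ E • f (l • x)) x =
      l ^ Module.finrank ℝ E • fderiv ℝ (fun x => f (l • x)) x :=
    congrFun (fderiv_const_smul_field (l ^ Module.finrank ℝ E)) x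
  have hnorm (x : E) : ‖fderiv ℝ (fun x => l ^ Module.finrank ℝ E • f (l • x)) x‖ =
      l ^ Module.finrank ℝ E * l * ‖fderiv ℝ f (l • x)‖ := by
    rw [hsmul, fderiv_comp_smul, norm_smul, norm_smul,
      Real.norm_of_nonneg hl.le, Real.norm_of_nonneg (by positivity), mul_assoc]
  simp only [hnorm]
  rw [integral_const_mul, Measure.integral_comp_smul_of_nonneg lam (fun x => ‖fderiv ℝ f x‖) l
    (hR := hl.le), smul_eq_mul]
  field_simp

end Gradient

section StableLevyMeasure

open scoped Pointwise

open Module (finrank)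

lemma isNegInvariant_restrict {G : Type*} [MeasurableSpace G] [InvolutiveNeg G] [MeasurableNeg G]
    {ν : Measure G} [ν.IsNegInvariant] {s : Set G} (hs : -s = s) :
    (ν.restrict s).IsNegInvariant where
  neg_eq_self := by
    conv_lhs => rw [← hs]
    exact ((ν.measurePreserving_neg).restrict_preimage_emb
      (MeasurableEquiv.neg G).measurableEmbedding s).map_eq

variable {E : Type*} [NormedAddCommGroup E] [InnerProductSpace ℝ E]

lemma nonempty_ball_inter_preimage_inner_Ioo {u : E} (hu : u ≠ 0) {R c : ℝ} (hR : 0 < R)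
    (hc : 0 < c) : (ball 0 R ∩ (fun y => ⟪u, y⟫) ⁻¹' Set.Ioo 0 c).Nonempty := by
  have hsmall : ∀ᶠ r : ℝ in nhds 0, ‖r • u‖ < R ∧ ⟪u, r • u⟫ < c :=
    (ContinuousAt.eventually_lt (by fun_prop) continuousAt_const (by simpa)).and
      (ContinuousAt.eventually_lt (by fun_prop) continuousAt_const (by simpa))
  obtain ⟨r, ⟨hrR, hrc⟩, hr⟩ :=
    ((hsmall.filter_mono nhdsWithin_le_nhds).and (self_mem_nhdsWithin (s := Set.Ioi 0))).exists
  have hpos : 0 < ⟪u, r • u⟫ := by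
    rw [inner_smul_right, real_inner_self_eq_norm_sq]
    exact mul_pos hr (pow_pos (norm_pos_iff.2 hu) 2)
  exact ⟨r • u, mem_ball_zero_iff.2 hrR, hpos, hrc⟩

variable (E) [FiniteDimensional ℝ E] [MeasurableSpace E] [BorelSpace E]

/-- The Lévy measure `|y|^{-(d + α)} dy` of the isotropic `α`-stable process on a `d`-dimensional
space. -/
noncomputable def stableLevyMeasure (α : ℝ) : Measure E :=
  volume.withDensity fun y => ENNReal.ofReal (‖y‖ ^ ((finrank ℝ E : ℝ) + α))⁻¹

/-- The Lévy measure of the isotropic `α`-stable process with all jumps of size larger than `R`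
suppressed. -/
noncomputable abbrev truncatedStableMeasure (α R : ℝ) : Measure E :=
  (stableLevyMeasure E α).restrict (closedBall 0 R)

instance isNegInvariant_stableLevyMeasure (α : ℝ) : (stableLevyMeasure E α).IsNegInvariant where
  neg_eq_self := by
    ext s hs
    rw [Measure.neg_apply, stableLevyMeasure, withDensity_apply _ hs.neg, withDensity_apply _ hs]
    simpa only [norm_neg, Set.neg_preimage] using
      (volume.measurePreserving_neg).setLIntegral_comp_preimage hs
        (f := fun y : E => ENNReal.ofReal (‖y‖ ^ ((finrank ℝ E : ℝ) + α))⁻¹) (by fun_prop)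

variable {E} {α : ℝ} {s : Set E}

lemma setIntegral_stableLevyMeasure (f : E → ℝ) (hs : MeasurableSet s) :
    ∫ y in s, f y ∂stableLevyMeasure E α =
      ∫ y in s, f y / ‖y‖ ^ ((finrank ℝ E : ℝ) + α) := by
  rw [stableLevyMeasure, setIntegral_withDensity_eq_setIntegral_toReal_smul (by fun_prop)
    (.of_forall fun y => ENNReal.ofReal_lt_top) f hs]
  refine integral_congr_ae (.of_forall fun y => ?_)
  simp only [ENNReal.toReal_ofReal (inv_nonneg.2 (Real.rpow_nonneg (norm_nonneg y) _)),
    smul_eq_mul, div_eq_inv_mul]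

lemma integrableOn_stableLevyMeasure_iff {f : E → ℝ} (hs : MeasurableSet s) :
    IntegrableOn f s (stableLevyMeasure E α) ↔
      IntegrableOn (fun y => f y / ‖y‖ ^ ((finrank ℝ E : ℝ) + α)) s := by
  rw [IntegrableOn, stableLevyMeasure, restrict_withDensity hs,
    integrable_withDensity_iff_integrable_smul' (by fun_prop)
      (.of_forall fun y => ENNReal.ofReal_lt_top)]
  refine integrable_congr (.of_forall fun y => ?_)
  simp only [ENNReal.toReal_ofReal (inv_nonneg.2 (Real.rpow_nonneg (norm_nonneg y) _)),
    smul_eq_mul, div_eq_inv_mul]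

lemma integrable_norm_pow_truncatedStableMeasure {k : ℕ} (hα : α < k) (R : ℝ) :
    Integrable (fun y : E => ‖y‖ ^ k) (truncatedStableMeasure E α R) := by
  rw [← IntegrableOn, integrableOn_stableLevyMeasure_iff measurableSet_closedBall]
  rcases subsingleton_or_nontrivial E with hE | hE
  · exact continuous_of_discreteTopology.continuousOn.integrableOn_compact
      (isCompact_closedBall 0 R)
  refine IntegrableOn.mono_set ?_ (closedBall_subset_ball (lt_add_one R |>.trans_le
    (add_le_add_left (le_abs_self R) 1)))
  rw [integrableOn_fun_norm_addHaar volume (f := fun r => r ^ k / r ^ ((finrank ℝ E : ℝ) + α))]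
  have hradial : Set.EqOn (fun r : ℝ => r ^ ((k : ℝ) - 1 - α))
      (fun r => r ^ (finrank ℝ E - 1) • (r ^ k / r ^ ((finrank ℝ E : ℝ) + α)))
      (Set.Ioo 0 (|R| + 1)) := fun r hr => by
    have hr0 : 0 < r := hr.1
    have hn : 1 ≤ finrank ℝ E := Module.finrank_pos
    simp only [smul_eq_mul, ← Real.rpow_natCast, ← Real.rpow_add hr0,
      ← Real.rpow_sub hr0, Nat.cast_sub hn]
    congr 1
    push_cast
    ring
  refine IntegrableOn.congr_fun ?_ hradial measurableSet_Ioo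
  rw [intervalIntegral.integrableOn_Ioo_rpow_iff (by positivity)]
  linarith

lemma levyExponent_truncatedStableMeasure_smul {l : ℝ} (hl : 0 < l) (R : ℝ) (u : E) :
    levyExponent (truncatedStableMeasure E α R) (l • u) =
      l ^ α * levyExponent (truncatedStableMeasure E α (l * R)) u := by
  have hball : l • closedBall (0 : E) R = closedBall 0 (l * R) := by
    rw [smul_closedBall' hl.ne', smul_zero, Real.norm_of_nonneg hl.le]
  have hscale (y : E) : (1 - Real.cos ⟪l • u, y⟫) / ‖y‖ ^ ((finrank ℝ E : ℝ) + α) =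
      l ^ ((finrank ℝ E : ℝ) + α) *
        ((1 - Real.cos ⟪u, l • y⟫) / ‖l • y‖ ^ ((finrank ℝ E : ℝ) + α)) := by
    rw [norm_smul, Real.norm_of_nonneg hl.le, Real.mul_rpow hl.le (norm_nonneg y),
      real_inner_smul_left, inner_smul_right]
    have := Real.rpow_pos_of_pos hl ((finrank ℝ E : ℝ) + α)
    field_simp
  simp only [levyExponent, setIntegral_stableLevyMeasure _ measurableSet_closedBall, hscale,
    integral_const_mul]
  rw [Measure.setIntegral_comp_smul_of_pos volume
    (fun y => (1 - Real.cos ⟪u, y⟫) / ‖y‖ ^ ((finrank ℝ E : ℝ) + α)) _ hl, hball, smul_eq_mul,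
    Real.rpow_add hl, Real.rpow_natCast]
  field_simp

lemma truncatedStableMeasure_eq_add {r R : ℝ} (h : r ≤ R) :
    truncatedStableMeasure E α R = truncatedStableMeasure E α r +
      (stableLevyMeasure E α).restrict (closedBall 0 R \ closedBall 0 r) := by
  rw [truncatedStableMeasure, ← Measure.restrict_inter_add_sdiff (closedBall 0 R)
    (measurableSet_closedBall (x := 0) (ε := r)),
    Set.inter_eq_right.2 (closedBall_subset_closedBall h)]

lemma isFiniteMeasure_stableLevyMeasure_restrict_sdiff (hα : α < 2) {r : ℝ} (hr : 0 < r) (R : ℝ) :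
    IsFiniteMeasure ((stableLevyMeasure E α).restrict (closedBall 0 R \ closedBall 0 r)) where
  measure_univ_lt_top := by
    have hsq := integrable_norm_pow_truncatedStableMeasure (E := E) (k := 2) (mod_cast hα) R
    refine lt_of_le_of_lt ?_ (hsq.measure_ge_lt_top (ε := r ^ 2) (by positivity))
    rw [Measure.restrict_apply_univ, Measure.restrict_apply (by measurability)]
    refine measure_mono fun y ⟨hyR, hyr⟩ => ⟨?_, hyR⟩
    rw [mem_closedBall_zero_iff, not_le] at hyr
    exact pow_le_pow_left₀ hr.le hyr.le 2

lemma levyExponent_truncatedStableMeasure_pos (hα : α < 2) {R : ℝ} (hR : 0 < R) {u : E}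
    (hu : u ≠ 0) : 0 < levyExponent (truncatedStableMeasure E α R) u := by
  have hint : IntegrableOn (fun y => 1 - Real.cos ⟪u, y⟫) (closedBall 0 R)
      (stableLevyMeasure E α) :=
    integrable_one_sub_cos_inner (integrable_norm_pow_truncatedStableMeasure (mod_cast hα) R) u
  rw [integrableOn_stableLevyMeasure_iff measurableSet_closedBall] at hint
  rw [levyExponent, setIntegral_stableLevyMeasure _ measurableSet_closedBall,
    setIntegral_pos_iff_support_of_nonneg_ae (.of_forall fun y =>
      div_nonneg (sub_nonneg.2 (Real.cos_le_one _)) (by positivity)) hint]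
  let U : Set E := ball 0 R ∩ (fun y => ⟪u, y⟫) ⁻¹' Set.Ioo 0 (2 * Real.pi)
  have hUopen : IsOpen U := isOpen_ball.inter (isOpen_Ioo.preimage (by fun_prop))
  have hUne : U.Nonempty := nonempty_ball_inter_preimage_inner_Ioo hu hR Real.two_pi_pos
  refine (hUopen.measure_pos volume hUne).trans_le
    (measure_mono fun y ⟨hyR, hy0, hypi⟩ => ⟨?_, ball_subset_closedBall hyR⟩)
  have hcos : Real.cos ⟪u, y⟫ ≠ 1 := fun h =>
    hy0.ne' ((Real.cos_eq_one_iff_of_lt_of_lt (by linarith [Real.pi_pos]) hypi).1 h)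
  have hy : y ≠ 0 := fun h => hcos (by simp [h])
  exact div_ne_zero (sub_ne_zero.2 hcos.symm) (Real.rpow_pos_of_pos (norm_pos_iff.2 hy) _).ne'

lemma levyExponent_truncatedStableMeasure_mono (hα : α < 2) {r R : ℝ} (h : r ≤ R) (u : E) :
    levyExponent (truncatedStableMeasure E α r) u ≤
      levyExponent (truncatedStableMeasure E α R) u :=
  setIntegral_mono_set
    (integrable_one_sub_cos_inner (integrable_norm_pow_truncatedStableMeasure (mod_cast hα) R) u)
    (.of_forall fun _ => sub_nonneg.2 (Real.cos_le_one _))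
    (closedBall_subset_closedBall h).eventuallyLE

lemma exists_mul_norm_rpow_sub_one_le_levyExponent (hα0 : 0 < α) (hα : α < 2) {R : ℝ}
    (hR : 0 < R) : ∃ c > 0, ∀ u : E,
      c * (‖u‖ ^ α - 1) ≤ levyExponent (truncatedStableMeasure E α R) u := by
  have hcont : Continuous (levyExponent (truncatedStableMeasure E α R)) :=
    continuous_iff_continuousAt.2 fun u => (hasFDerivAt_levyExponent
      (integrable_norm_pow_truncatedStableMeasure (mod_cast hα) R) u).continuousAt
  obtain ⟨c, hc, hle⟩ := (isCompact_sphere (0 : E) 1).exists_forall_le' hcont.continuousOn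
    fun u hu => levyExponent_truncatedStableMeasure_pos hα hR (ne_zero_of_mem_unit_sphere ⟨u, hu⟩)
  refine ⟨c, hc, fun u => ?_⟩
  rcases le_total ‖u‖ 1 with hu | hu
  · have hpow : ‖u‖ ^ α ≤ 1 := Real.rpow_le_one (norm_nonneg u) hu hα0.le
    exact (mul_nonpos_of_nonneg_of_nonpos hc.le (by linarith)).trans levyExponent_nonneg
  have hu0 : 0 < ‖u‖ := by linarith
  have hunit : ‖u‖⁻¹ • u ∈ sphere (0 : E) 1 :=
    mem_sphere_zero_iff_norm.2 (norm_smul_inv_norm (norm_pos_iff.1 hu0))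
  calc c * (‖u‖ ^ α - 1) ≤ ‖u‖ ^ α * c := by linarith
    _ ≤ ‖u‖ ^ α * levyExponent (truncatedStableMeasure E α R) (‖u‖⁻¹ • u) := by
        gcongr
        exact hle _ hunit
    _ ≤ ‖u‖ ^ α * levyExponent (truncatedStableMeasure E α (‖u‖ * R)) (‖u‖⁻¹ • u) := by
        gcongr
        exact levyExponent_truncatedStableMeasure_mono hα (le_mul_of_one_le_left hR.le hu) _
    _ = levyExponent (truncatedStableMeasure E α R) u := by
        rw [← levyExponent_truncatedStableMeasure_smul hu0, smul_inv_smul₀ hu0.ne']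

end StableLevyMeasure

section LevyDensity

open Module (finrank)
open scoped SchwartzMap

variable {E : Type*} [NormedAddCommGroup E] [InnerProductSpace ℝ E] [FiniteDimensional ℝ E]
  [MeasurableSpace E] [BorelSpace E] {μ ν : Measure E} {t : ℝ}

/-- The density at time `t` of the symmetric Lévy process with Lévy measure `ν`, defined by Fourier
inversion. -/
noncomputable def levyDensity (ν : Measure E) (t : ℝ) (x : E) : ℝ :=
  ((2 * Real.pi) ^ finrank ℝ E)⁻¹ * cosTransform (fun u => Real.exp (-t * levyExponent ν u)) x

lemma exists_schwartzMap_eq_levyDensity {f : 𝓢(E, ℝ)}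
    (hf : ⇑f = fun u => Real.exp (-t * levyExponent ν u)) :
    ∃ p : 𝓢(E, ℝ), ⇑p = levyDensity ν t := by
  obtain ⟨p, hp⟩ := exists_schwartzMap_eq_cosTransform f
  refine ⟨((2 * Real.pi) ^ finrank ℝ E)⁻¹ • p, funext fun x => ?_⟩
  rw [smul_apply, hp, hf, levyDensity, smul_eq_mul]

lemma levyDensity_eq_pow_finrank_smul {l T : ℝ} (hl : 0 < l)
    (hμν : ∀ u, t * levyExponent ν (l • u) = T * levyExponent μ u) :
    levyDensity ν t = fun x => l ^ finrank ℝ E • levyDensity μ T (l • x) := by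
  ext x
  rw [levyDensity, cosTransform_eq_pow_finrank_mul _ hl, levyDensity, smul_eq_mul]
  simp only [neg_mul, hμν]
  ring

variable [IsFiniteMeasure μ] [μ.IsNegInvariant]

lemma integral_levyDensity_add (hμ : Integrable (fun y => ‖y‖ ^ 2) μ)
    (hν : Integrable (fun y => ‖y‖ ^ 2) ν) (ht : 0 ≤ t)
    (hint : Integrable fun u => Real.exp (-t * levyExponent ν u)) (x : E) :
    ∫ z, levyDensity ν t (x + z) ∂compoundPoisson (t.toNNReal • μ) =
      levyDensity (ν + μ) t x := by
  have hchar (u : E) : charFun (compoundPoisson (t.toNNReal • μ)) u =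
      Real.exp (-t * levyExponent μ u) := by
    rw [charFun_compoundPoisson_eq_exp_neg_levyExponent, levyExponent_nnreal_smul,
      Real.coe_toNNReal t ht, neg_mul]
  simp only [levyDensity, integral_const_mul]
  rw [integral_cosTransform_add hint hchar]
  simp only [levyExponent_add hν hμ, ← Real.exp_add, mul_add, add_comm (-t * levyExponent μ _)]

lemma integral_norm_fderiv_levyDensity_add_le (hμ : Integrable (fun y => ‖y‖ ^ 2) μ)
    (hν : Integrable (fun y => ‖y‖ ^ 2) ν) (ht : 0 ≤ t) {f : 𝓢(E, ℝ)}
    (hf : ⇑f = fun u => Real.exp (-t * levyExponent ν u)) :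
    ∫ x, ‖fderiv ℝ (levyDensity (ν + μ) t) x‖ ≤ ∫ x, ‖fderiv ℝ (levyDensity ν t) x‖ := by
  obtain ⟨p, hp⟩ := exists_schwartzMap_eq_levyDensity hf
  have hadd := integral_levyDensity_add hμ hν ht (hf ▸ f.integrable)
  rw [← funext hadd, ← hp]
  exact integral_norm_fderiv_integral_comp_add_le (p.smooth 1) (p.norm_le_seminorm ℝ)
    ((SchwartzMap.fderivCLM ℝ E ℝ p).norm_le_seminorm ℝ) (SchwartzMap.fderivCLM ℝ E ℝ p).integrable

end LevyDensity

section TruncatedStable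

open Module (finrank)
open scoped SchwartzMap

variable {E : Type*} [NormedAddCommGroup E] [InnerProductSpace ℝ E] [FiniteDimensional ℝ E]
  [MeasurableSpace E] [BorelSpace E] {α R t : ℝ}

lemma exists_schwartzMap_eq_exp_neg_mul_levyExponent (hα0 : 0 < α) (hα : α < 2) (hR : 0 < R)
    (ht : 0 < t) :
    ∃ f : 𝓢(E, ℝ), ⇑f = fun u => Real.exp (-t * levyExponent (truncatedStableMeasure E α R) u) := by
  have htemperate : (levyExponent (truncatedStableMeasure E α R)).HasTemperateGrowth :=
    hasTemperateGrowth_levyExponent fun k hk =>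
      integrable_norm_pow_truncatedStableMeasure (hα.trans_le (mod_cast hk)) R
  obtain ⟨c, hc, hle⟩ := exists_mul_norm_rpow_sub_one_le_levyExponent (E := E) hα0 hα hR
  refine exists_schwartzMap_eq_exp (.mul (.const (-t)) htemperate)
    (exists_one_add_norm_pow_mul_exp_le (a := t * c) (mul_pos ht hc) hα0 fun u => ?_)
  nlinarith [mul_le_mul_of_nonneg_left (hle u) ht.le]

lemma integral_norm_fderiv_levyDensity_truncatedStableMeasure_anti (hα0 : 0 < α) (hα : α < 2)
    (hR : 0 < R) (ht : 0 < t) {R' : ℝ} (hRR' : R ≤ R') :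
    ∫ x, ‖fderiv ℝ (levyDensity (truncatedStableMeasure E α R') t) x‖ ≤
      ∫ x, ‖fderiv ℝ (levyDensity (truncatedStableMeasure E α R) t) x‖ := by
  let jumps : Measure E := (stableLevyMeasure E α).restrict (closedBall 0 R' \ closedBall 0 R)
  have : IsFiniteMeasure jumps := isFiniteMeasure_stableLevyMeasure_restrict_sdiff hα hR R'
  have : jumps.IsNegInvariant := isNegInvariant_restrict (by ext y; simp)
  have hsq (r : ℝ) : Integrable (fun y => ‖y‖ ^ 2) (truncatedStableMeasure E α r) :=
    integrable_norm_pow_truncatedStableMeasure (mod_cast hα) r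
  have hsq_jumps : Integrable (fun y => ‖y‖ ^ 2) jumps :=
    IntegrableOn.mono_set (hsq R') Set.sdiff_subset
  obtain ⟨f, hf⟩ := exists_schwartzMap_eq_exp_neg_mul_levyExponent (E := E) hα0 hα hR ht
  rw [truncatedStableMeasure_eq_add hRR']
  exact integral_norm_fderiv_levyDensity_add_le hsq_jumps (hsq R) ht.le hf

lemma integral_norm_fderiv_levyDensity_truncatedStableMeasure_le (hα0 : 0 < α) (hα : α < 2)
    (hR : 0 < R) (ht : 0 < t) {T : ℝ} (htT : t ≤ T) :
    ∫ x, ‖fderiv ℝ (levyDensity (truncatedStableMeasure E α R) t) x‖ ≤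
      (T / t) ^ (1 / α) * ∫ x, ‖fderiv ℝ (levyDensity (truncatedStableMeasure E α R) T) x‖ := by
  have hT : 0 < T := ht.trans_le htT
  let l := (T / t) ^ (1 / α)
  have hl1 : 1 ≤ l := Real.one_le_rpow ((one_le_div ht).2 htT) (by positivity)
  have hl : 0 < l := by linarith
  have hlα : t * l ^ α = T := by
    rw [← Real.rpow_mul (by positivity), one_div_mul_cancel hα0.ne', Real.rpow_one,
      mul_div_cancel₀ _ ht.ne']
  have hscale (u : E) : t * levyExponent (truncatedStableMeasure E α R) (l • u) =
      T * levyExponent (truncatedStableMeasure E α (l * R)) u := by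
    rw [levyExponent_truncatedStableMeasure_smul hl, ← mul_assoc, hlα]
  rw [levyDensity_eq_pow_finrank_smul hl hscale,
    integral_norm_fderiv_pow_finrank_smul_comp_smul _ hl]
  exact mul_le_mul_of_nonneg_left (integral_norm_fderiv_levyDensity_truncatedStableMeasure_anti
    hα0 hα hR hT (le_mul_of_one_le_left hR.le hl1)) hl.le

end TruncatedStable

section EuclideanSpace

variable {d : ℕ} {α : ℝ}

lemma Psi_eq_levyExponent : Psi d α = levyExponent (truncatedStableMeasure _ α 1) := by
  ext u
  rw [levyExponent, setIntegral_stableLevyMeasure _ measurableSet_closedBall,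
    finrank_euclideanSpace_fin, Psi]

lemma pdens_eq_levyDensity (t : ℝ) :
    pdens d α t = levyDensity (truncatedStableMeasure _ α 1) t := by
  ext x
  rw [levyDensity, ← Psi_eq_levyExponent, finrank_euclideanSpace_fin, cosTransform, pdens]

end EuclideanSpace

theorem stmt_5_general (d : ℕ) (α T : ℝ) (hα0 : 0 < α) (hα2 : α < 2) (hT : 0 < T) :
    (∀ t : ℝ, 0 < t → t ≤ T → ContDiff ℝ 1 (pdens d α t)) ∧
    ∃ C : ℝ, ∀ t : ℝ, 0 < t → t ≤ T → ∀ i : Fin d,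
      Integrable (fun x : EuclideanSpace ℝ (Fin d) =>
        fderiv ℝ (pdens d α t) x (EuclideanSpace.single i 1)) ∧
      (∫ x : EuclideanSpace ℝ (Fin d),
          |fderiv ℝ (pdens d α t) x (EuclideanSpace.single i 1)|) ≤
        C * t ^ (-(1 / α)) := by
  have hschwartz (t : ℝ) (ht : 0 < t) :
      ∃ p : SchwartzMap (EuclideanSpace ℝ (Fin d)) ℝ, ⇑p = pdens d α t := by
    obtain ⟨f, hf⟩ := exists_schwartzMap_eq_exp_neg_mul_levyExponent
      (E := EuclideanSpace ℝ (Fin d)) hα0 hα2 one_pos ht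
    rw [pdens_eq_levyDensity]
    exact exists_schwartzMap_eq_levyDensity hf
  constructor
  · rintro t ht -
    obtain ⟨p, hp⟩ := hschwartz t ht
    exact hp ▸ p.smooth 1
  refine ⟨T ^ (1 / α) * ∫ x, ‖fderiv ℝ (pdens d α T) x‖, fun t ht htT i => ?_⟩
  obtain ⟨p, hp⟩ := hschwartz t ht
  have hgrad : Integrable (fderiv ℝ (pdens d α t)) :=
    hp ▸ (SchwartzMap.fderivCLM ℝ _ ℝ p).integrable
  have hpartial := hgrad.apply_continuousLinearMap (EuclideanSpace.single i 1)
  have hunit : ‖EuclideanSpace.single i (1 : ℝ)‖ ≤ 1 := by simp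
  refine ⟨hpartial, ?_⟩
  calc ∫ x, |fderiv ℝ (pdens d α t) x (EuclideanSpace.single i 1)|
      ≤ ∫ x, ‖fderiv ℝ (pdens d α t) x‖ := integral_mono hpartial.abs hgrad.norm fun x =>
        (fderiv ℝ (pdens d α t) x).unit_le_opNorm _ hunit
    _ ≤ (T / t) ^ (1 / α) * ∫ x, ‖fderiv ℝ (pdens d α T) x‖ := by
        simp only [pdens_eq_levyDensity]
        exact integral_norm_fderiv_levyDensity_truncatedStableMeasure_le hα0 hα2 one_pos ht htT
    _ = T ^ (1 / α) * (∫ x, ‖fderiv ℝ (pdens d α T) x‖) * t ^ (-(1 / α)) := by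
        rw [Real.div_rpow hT.le ht.le, Real.rpow_neg ht.le]
        ring

/-- The transition density `p_t` is `C¹`, its partial derivatives are integrable, and
`‖∂p_t/∂x_i‖_{L¹} ≤ C t^{-1/α}` uniformly for `0 < t ≤ T`. -/
theorem stmt_5 (d : ℕ) (hd : 2 ≤ d) (α T : ℝ) (hα1 : 1 < α) (hα2 : α < 2) (hT : 0 < T) :
    (∀ t : ℝ, 0 < t → t ≤ T → ContDiff ℝ 1 (pdens d α t)) ∧
    ∃ C : ℝ, ∀ t : ℝ, 0 < t → t ≤ T → ∀ i : Fin d,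
      Integrable (fun x : EuclideanSpace ℝ (Fin d) =>
        fderiv ℝ (pdens d α t) x (EuclideanSpace.single i 1)) ∧
      (∫ x : EuclideanSpace ℝ (Fin d),
          |fderiv ℝ (pdens d α t) x (EuclideanSpace.single i 1)|) ≤
        C * t ^ (-(1 / α)) :=
  stmt_5_general d α T (by linarith) hα2 hT
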